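/- Fix m with 3/2 < m < 2 and β with 0 < β < m − 3/2. There exist constants C < ∞ and ε₀ > 0 such that for every z ∈ bD_m and every 0 < ε < ε₀: ∫_{bD_m} |Re w₁|^{2m−4} · |w−z|² · | Δ(w, z+εN(z))^{−2} − Δ(w,z)^{−2} | dH³(w) ≤ C·ε^β. -/

import Mathlib

open MeasureTheory Complex
open scoped ENNReal

noncomputable section

/-- `ℂ²` with the Euclidean metric. -/
abbrev C2 := EuclideanSpace ℂ (Fin 2)

instance : MeasurableSpace C2 := borel _
instance : BorelSpace C2 := ⟨rfl⟩

/-- The defining function `ρ(w) = |w₂|² + |Re w₁|^m + (Im w₁)² − 1`. -/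
def rhom (m : ℝ) (w : C2) : ℝ := ‖w 1‖ ^ 2 + |(w 0).re| ^ m + (w 0).im ^ 2 - 1

/-- The domain `D_m = {ρ < 0}`. -/
def Dm (m : ℝ) : Set C2 := {w | rhom m w < 0}

/-- The boundary `bD_m = {ρ = 0}`. -/
def bDm (m : ℝ) : Set C2 := {w | rhom m w = 0}

/-- The Cauchy–Leray denominator
`Δ(w,z) = ((m/2)|u₁|^{m−1}·sgn(u₁) − i v₁)(w₁−z₁) + conj(w₂)(w₂−z₂)`. -/
def Deltam (m : ℝ) (w z : C2) : ℂ :=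
  ((m / 2 * |(w 0).re| ^ (m - 1) * Real.sign (w 0).re : ℝ) - I * ((w 0).im : ℂ))
      * (w 0 - z 0)
    + (starRingEnd ℂ) (w 1) * (w 1 - z 1)

/-- The real gradient `∇ρ` on `ℝ⁴ ≅ ℂ²`, written as a vector in `ℂ²`:
`∇ρ(w) = (m|u₁|^{m−1} sgn(u₁) + 2i v₁, 2w₂)`. -/
def gradRhom (m : ℝ) (w : C2) : C2 :=
  (WithLp.equiv 2 (Fin 2 → ℂ)).symm
    ![(m * |(w 0).re| ^ (m - 1) * Real.sign (w 0).re : ℝ)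
        + (2 * (w 0).im : ℝ) * I, 2 * w 1]

/-- The inward unit normal `N(z) = −∇ρ(z)/|∇ρ(z)|`. -/
def Nm (m : ℝ) (z : C2) : C2 := (-‖gradRhom m z‖⁻¹ : ℝ) • gradRhom m z

/-!
The Cauchy–Leray denominator is `Δ(w, z) = ½ ⟨∇ρ(w), w - z⟩`. On `[-1, 1]` the function `|u|^m` is
strongly convex with modulus `m (m - 1)`, so `Re Δ(w, z) ≥ m (m - 1) / 4 * |w - z|²` on the
boundary. Moving `z` inwards by `ε N(z)` adds a nonnegative multiple, at most `ε / 2`, of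
`⟨∇ρ(w), ∇ρ(z)⟩` to `Δ`, and the real part of this product is at least `-2 |w - z|²`; hence the
quadratic lower bound survives for small `ε`. Since `Δ` moves by at most `2 ε`, interpolating
between the trivial and the Lipschitz bound for the difference of inverse squares dominates the
kernel by `ε^β |w - z|^(-2 - 2β)`.

It remains to integrate `|Re w₁|^(-a) |w - z|^(-2 - 2β)` over the boundary. At each point some real
coordinate is at least `1/4` in modulus, and the other three are a bilipschitz chart there. In this
chart Young's inequality bounds the kernel by a product of three one-dimensional singularities of
order `γ = (a + 2 + 2β) / 3`, which is integrable because `a + 2β < 1` gives `γ < 1`.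
-/

open Set Metric
open scoped NNReal

section PowerFunction

theorem strongConvexOn_tangent_le {s : Set ℝ} {f : ℝ → ℝ} {c f' x y : ℝ}
    (hf : StrongConvexOn s c f) (hx : x ∈ s) (hy : y ∈ s) (hd : HasDerivAt f f' x) :
    f x + f' * (y - x) + c / 2 * (y - x) ^ 2 ≤ f y := by
  simp only [strongConvexOn_iff_convex, Real.norm_eq_abs, sq_abs] at hf
  have hd' : HasDerivAt (fun t ↦ f t - c / 2 * t ^ 2) (f' - c * x) x :=
    (hd.sub ((hasDerivAt_pow 2 x).const_mul (c / 2))).congr_deriv (by ring)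
  rcases lt_trichotomy x y with h | rfl | h
  · have := hf.le_slope_of_hasDerivAt hx hy h hd'
    rw [slope_def_field, le_div_iff₀ (sub_pos.2 h)] at this
    linarith
  · simp
  · have := hf.slope_le_of_hasDerivAt hy hx h hd'
    rw [slope_def_field, div_le_iff₀ (sub_pos.2 h)] at this
    linarith

theorem hasDerivAt_rpow_sub_sq (m c : ℝ) {t : ℝ} (ht : 0 < t) :
    HasDerivAt (fun t : ℝ ↦ t ^ m - c * t ^ 2) (m * t ^ (m - 1) - 2 * c * t) t :=
  ((Real.hasDerivAt_rpow_const (Or.inl ht.ne')).sub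
    ((hasDerivAt_pow 2 t).const_mul c)).congr_deriv (by norm_num; ring)

variable {m : ℝ}

theorem convexOn_rpow_sub_sq (hm1 : 1 < m) (hm2 : m ≤ 2) :
    ConvexOn ℝ (Icc 0 1) fun t : ℝ ↦ t ^ m - m * (m - 1) / 2 * t ^ 2 := by
  refine convexOn_of_hasDerivWithinAt2_nonneg (convex_Icc 0 1)
    (f' := fun t ↦ m * t ^ (m - 1) - 2 * (m * (m - 1) / 2) * t)
    (f'' := fun t ↦ m * (m - 1) * (t ^ (m - 2) - 1)) ?_ ?_ ?_ ?_
  · exact ((Real.continuous_rpow_const (by linarith)).sub (by fun_prop)).continuousOn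
  all_goals
    intro t ht
    rw [interior_Icc] at ht
  · exact (hasDerivAt_rpow_sub_sq m _ ht.1).hasDerivWithinAt
  · refine (HasDerivAt.congr_deriv (((Real.hasDerivAt_rpow_const (Or.inl ht.1.ne')).const_mul m).sub
      ((hasDerivAt_id t).const_mul _)) ?_).hasDerivWithinAt
    rw [sub_sub, one_add_one_eq_two]
    ring
  · have := Real.one_le_rpow_of_pos_of_le_one_of_nonpos ht.1 ht.2.le (by linarith : m - 2 ≤ 0)
    exact mul_nonneg (mul_nonneg (by linarith) (by linarith)) (by linarith)

theorem monotoneOn_rpow_sub_sq (hm1 : 1 < m) (hm2 : m ≤ 2) :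
    MonotoneOn (fun t : ℝ ↦ t ^ m - m * (m - 1) / 2 * t ^ 2) (Icc 0 1) := by
  refine monotoneOn_of_hasDerivWithinAt_nonneg (convex_Icc 0 1)
    (f' := fun t ↦ m * t ^ (m - 1) - 2 * (m * (m - 1) / 2) * t) ?_ ?_ ?_
  · exact ((Real.continuous_rpow_const (by linarith)).sub (by fun_prop)).continuousOn
  all_goals
    intro t ht
    rw [interior_Icc] at ht
  · exact (hasDerivAt_rpow_sub_sq m _ ht.1).hasDerivWithinAt
  · have ht_le : t ≤ t ^ (m - 1) := Real.self_le_rpow_of_le_one ht.1.le ht.2.le (by linarith)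
    have h : (m - 1) * t ≤ t ^ (m - 1) := (mul_le_of_le_one_left ht.1.le (by linarith)).trans ht_le
    linarith [mul_le_mul_of_nonneg_left h (by linarith : (0 : ℝ) ≤ m)]

theorem strongConvexOn_norm_rpow {E : Type*} [NormedAddCommGroup E] [InnerProductSpace ℝ E]
    (hm1 : 1 < m) (hm2 : m ≤ 2) :
    StrongConvexOn (closedBall (0 : E) 1) (m * (m - 1)) fun x ↦ ‖x‖ ^ m := by
  have h_ball : Convex ℝ (closedBall (0 : E) 1) := convex_closedBall 0 1
  have h_sub : norm '' closedBall (0 : E) 1 ⊆ Icc 0 1 := by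
    rintro _ ⟨x, hx, rfl⟩
    exact ⟨norm_nonneg x, mem_closedBall_zero_iff.1 hx⟩
  have h_image : Convex ℝ (norm '' closedBall (0 : E) 1) :=
    (h_ball.isPreconnected.image _ continuous_norm.continuousOn).ordConnected.convex
  exact strongConvexOn_iff_convex.2 <|
    ((convexOn_rpow_sub_sq hm1 hm2).subset h_sub h_image).comp (convexOn_norm h_ball)
      ((monotoneOn_rpow_sub_sq hm1 hm2).mono h_sub)

theorem abs_abs_rpow_sub_abs_rpow_le {u v : ℝ} (hm1 : 1 < m) (hm2 : m ≤ 2) (hu : |u| ≤ 1)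
    (hv : |v| ≤ 1) : |(|u| ^ m - |v| ^ m)| ≤ 2 * |u - v| := by
  have h_deriv (t : ℝ) (ht : t ∈ Icc (-1 : ℝ) 1) : ‖m * |t| ^ (m - 2) * t‖ ≤ 2 := by
    rcases eq_or_ne t 0 with rfl | ht0
    · simp
    have h_pow : |t| ^ (m - 2) * |t| = |t| ^ (m - 1) := by
      rw [← Real.rpow_add_one (abs_pos.2 ht0).ne']
      ring_nf
    have h_le : |t| ^ (m - 1) ≤ 1 :=
      Real.rpow_le_one (abs_nonneg t) (abs_le.2 ht) (by linarith)
    rw [Real.norm_eq_abs, abs_mul, abs_mul, abs_of_pos (by linarith : 0 < m),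
      abs_of_nonneg (Real.rpow_nonneg (abs_nonneg t) _), mul_assoc, h_pow]
    nlinarith
  exact (convex_Icc (-1) 1).norm_image_sub_le_of_norm_hasDerivWithin_le
    (fun t _ ↦ (hasDerivAt_abs_rpow t hm1).hasDerivWithinAt) h_deriv (abs_le.1 hv) (abs_le.1 hu)

theorem mul_sub_le_rpow_sub_rpow {x y : ℝ} (hm1 : 1 < m) (hm2 : m ≤ 2) (hx : 0 < x)
    (hxy : x ≤ y) (hy : y ≤ 1) : x * (y - x) ≤ y ^ m - x ^ m := by
  have h_conv := convexOn_rpow hm1.le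
  have hd : HasDerivAt (fun t : ℝ ↦ t ^ m) (m * x ^ (m - 1)) x :=
    Real.hasDerivAt_rpow_const (Or.inl hx.ne')
  have h_slope : x ≤ m * x ^ (m - 1) := by
    have := Real.self_le_rpow_of_le_one hx.le (hxy.trans hy) (by linarith : m - 1 ≤ 1)
    nlinarith
  rcases hxy.eq_or_lt with rfl | hlt
  · simp
  have h := h_conv.le_slope_of_hasDerivAt hx.le (hx.le.trans hxy) hlt hd
  rw [slope_def_field, le_div_iff₀ (sub_pos.2 hlt)] at h
  exact (mul_le_mul_of_nonneg_right h_slope (sub_nonneg.2 hxy)).trans h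

theorem mul_abs_sub_le_abs_rpow_sub_rpow {δ x y : ℝ} (hm1 : 1 < m) (hm2 : m ≤ 2) (hδ : 0 < δ)
    (hx : x ∈ Icc δ 1) (hy : y ∈ Icc δ 1) : δ * |x - y| ≤ |x ^ m - y ^ m| := by
  wlog hxy : y ≤ x generalizing x y
  · rw [abs_sub_comm x, abs_sub_comm (x ^ m)]
    exact this hy hx (le_of_not_ge hxy)
  rw [abs_of_nonneg (sub_nonneg.2 hxy)]
  calc δ * (x - y) ≤ y * (x - y) := mul_le_mul_of_nonneg_right hy.1 (sub_nonneg.2 hxy)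
    _ ≤ x ^ m - y ^ m := mul_sub_le_rpow_sub_rpow hm1 hm2 (hδ.trans_le hy.1) hxy hx.2
    _ ≤ |x ^ m - y ^ m| := le_abs_self _

/-- The odd power `sgn(x)|x|^p`; up to a factor `p + 1` it is the derivative of `|x|^(p + 1)`. -/
def signedRpow (p x : ℝ) : ℝ := |x| ^ p * Real.sign x

theorem abs_signedRpow {p : ℝ} (hp : p ≠ 0) (x : ℝ) : |signedRpow p x| = |x| ^ p := by
  rcases lt_trichotomy x 0 with hx | rfl | hx
  · simp [signedRpow, Real.sign_of_neg hx, abs_of_nonneg (Real.rpow_nonneg (abs_nonneg x) p)]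
  · simp [signedRpow, Real.zero_rpow hp]
  · simp [signedRpow, Real.sign_of_pos hx, abs_of_nonneg (Real.rpow_nonneg (abs_nonneg x) p)]

theorem hasDerivAt_abs_rpow_signedRpow (hm : 1 < m) (x : ℝ) :
    HasDerivAt (fun t : ℝ ↦ |t| ^ m) (m * signedRpow (m - 1) x) x := by
  refine (hasDerivAt_abs_rpow x hm).congr_deriv ?_
  rcases eq_or_ne x 0 with rfl | hx
  · simp [signedRpow]
  have h_pow : |x| ^ (m - 1) = |x| ^ (m - 2) * |x| := by
    rw [← Real.rpow_add_one (abs_pos.2 hx).ne']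
    ring_nf
  rw [signedRpow, h_pow, mul_assoc, mul_assoc]
  congr 2
  rcases hx.lt_or_gt with h | h
  · simp [Real.sign_of_neg h, abs_of_neg h]
  · simp [Real.sign_of_pos h, abs_of_pos h]

theorem abs_rpow_tangent_add_sq_le {u v : ℝ} (hm1 : 1 < m) (hm2 : m ≤ 2) (hu : |u| ≤ 1)
    (hv : |v| ≤ 1) :
    |u| ^ m + m * signedRpow (m - 1) u * (v - u) + m * (m - 1) / 2 * (v - u) ^ 2 ≤ |v| ^ m :=
  strongConvexOn_tangent_le (strongConvexOn_norm_rpow hm1 hm2) (mem_closedBall_zero_iff.2 hu)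
    (mem_closedBall_zero_iff.2 hv) (hasDerivAt_abs_rpow_signedRpow hm1 u)

theorem signedRpow_mul_nonneg (p : ℝ) {u v : ℝ} (h : 0 ≤ u * v) :
    0 ≤ signedRpow p u * signedRpow p v := by
  have h_sign : 0 ≤ Real.sign u * Real.sign v := by
    rcases h.eq_or_lt with h0 | h0
    · rcases mul_eq_zero.1 h0.symm with rfl | rfl <;> simp
    · rcases mul_pos_iff.1 h0 with ⟨hu, hv⟩ | ⟨hu, hv⟩
      · simp [Real.sign_of_pos hu, Real.sign_of_pos hv]
      · simp [Real.sign_of_neg hu, Real.sign_of_neg hv]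
  calc 0 ≤ (|u| ^ p * |v| ^ p) * (Real.sign u * Real.sign v) := by positivity
    _ = signedRpow p u * signedRpow p v := by unfold signedRpow; ring

theorem sq_mul_rpow_sub_one_le {x : ℝ} (hm1 : 1 < m) (hm2 : m ≤ 2) (hx : 0 ≤ x) :
    m ^ 2 * x ^ (m - 1) ≤ 2 + 4 * x := by
  have h_bernoulli := rpow_one_add_le_one_add_mul_self (by linarith : -1 ≤ x - 1)
    (by linarith : 0 ≤ m - 1) (by linarith)
  rw [add_sub_cancel] at h_bernoulli
  have h_const : m ^ 2 * (2 - m) ≤ 2 := by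
    nlinarith [mul_nonneg (by linarith : 0 ≤ m) (sq_nonneg (m - 1))]
  have h_slope : m ^ 2 * (m - 1) ≤ 4 := by nlinarith
  calc m ^ 2 * x ^ (m - 1) ≤ m ^ 2 * (1 + (m - 1) * (x - 1)) := by gcongr
    _ = m ^ 2 * (2 - m) + m ^ 2 * (m - 1) * x := by ring
    _ ≤ 2 + 4 * x := by gcongr

theorem abs_rpow_le_half_add_sq {u : ℝ} (hm : 1 ≤ m) (hu : |u| ≤ 1) :
    |u| ^ m ≤ (1 + u ^ 2) / 2 := by
  have h := Real.rpow_le_self_of_le_one (abs_nonneg u) hu hm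
  nlinarith [sq_abs u, sq_nonneg (|u| - 1)]

theorem neg_sub_sq_le_signedRpow_mul {u v : ℝ} (hm1 : 1 < m) (hm2 : m ≤ 2) (hu : |u| ≤ 1)
    (hv : |v| ≤ 1) :
    -2 * (u - v) ^ 2 ≤
      m ^ 2 * (signedRpow (m - 1) u * signedRpow (m - 1) v)
        + 2 * (1 - |u| ^ m) + 2 * (1 - |v| ^ m) := by
  have hum := abs_rpow_le_half_add_sq hm1.le hu
  have hvm := abs_rpow_le_half_add_sq hm1.le hv
  rcases le_or_gt 0 (u * v) with h | h
  · have h_prod := mul_nonneg (sq_nonneg m) (signedRpow_mul_nonneg (m - 1) h)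
    have hu1 := Real.rpow_le_one (abs_nonneg u) hu (by linarith : 0 ≤ m)
    have hv1 := Real.rpow_le_one (abs_nonneg v) hv (by linarith : 0 ≤ m)
    nlinarith [sq_nonneg (u - v)]
  · have h_abs : |signedRpow (m - 1) u * signedRpow (m - 1) v| = |u * v| ^ (m - 1) := by
      rw [abs_mul, abs_signedRpow (by linarith), abs_signedRpow (by linarith), abs_mul,
        Real.mul_rpow (abs_nonneg u) (abs_nonneg v)]
    have h_prod : -(m ^ 2 * |u * v| ^ (m - 1)) ≤
        m ^ 2 * (signedRpow (m - 1) u * signedRpow (m - 1) v) := by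
      rw [← h_abs, ← mul_neg]
      exact mul_le_mul_of_nonneg_left (neg_abs_le _) (sq_nonneg m)
    have h_pow := sq_mul_rpow_sub_one_le hm1 hm2 (abs_nonneg (u * v))
    rw [abs_of_neg h] at h_pow h_prod
    nlinarith

end PowerFunction

section InverseSquares

theorem min_one_le_rpow {x β : ℝ} (hx : 0 ≤ x) (hβ0 : 0 ≤ β) (hβ1 : β ≤ 1) :
    min 1 x ≤ x ^ β := by
  rcases le_total 1 x with h | h
  · exact (min_le_left 1 x).trans (Real.one_le_rpow h hβ0)
  · exact (min_le_right 1 x).trans (Real.self_le_rpow_of_le_one hx h hβ1)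

variable {𝕜 : Type*} [NormedField 𝕜] {a b : 𝕜} {R δ β : ℝ}

theorem norm_inv_sub_inv_le_rpow (hR : 0 < R) (ha : R ≤ ‖a‖) (hb : R ≤ ‖b‖)
    (hab : ‖a - b‖ ≤ δ) (hβ0 : 0 ≤ β) (hβ1 : β ≤ 1) :
    ‖b⁻¹ - a⁻¹‖ ≤ 2 / R * (δ / R) ^ β := by
  have ha0 : a ≠ 0 := norm_pos_iff.1 (hR.trans_le ha)
  have hb0 : b ≠ 0 := norm_pos_iff.1 (hR.trans_le hb)
  have hδ : 0 ≤ δ := (norm_nonneg _).trans hab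
  have h_far : ‖b⁻¹ - a⁻¹‖ ≤ 2 / R := by
    calc ‖b⁻¹ - a⁻¹‖ ≤ ‖b⁻¹‖ + ‖a⁻¹‖ := norm_sub_le _ _
      _ ≤ R⁻¹ + R⁻¹ := by
        rw [norm_inv, norm_inv]
        gcongr
      _ = 2 / R := by ring
  have h_near : ‖b⁻¹ - a⁻¹‖ ≤ 2 / R * (δ / R) := by
    rw [inv_sub_inv hb0 ha0, norm_div, norm_mul]
    calc ‖a - b‖ / (‖b‖ * ‖a‖) ≤ δ / (R * R) := by gcongr
      _ ≤ 2 * (δ / (R * R)) := by linarith [div_nonneg hδ (mul_pos hR hR).le]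
      _ = 2 / R * (δ / R) := by ring
  calc ‖b⁻¹ - a⁻¹‖ ≤ 2 / R * min 1 (δ / R) := by
        rw [mul_min_of_nonneg _ _ (by positivity), mul_one]
        exact le_min h_far h_near
    _ ≤ 2 / R * (δ / R) ^ β := by
        gcongr
        exact min_one_le_rpow (by positivity) hβ0 hβ1

theorem norm_inv_sq_sub_inv_sq_le_rpow (hR : 0 < R) (ha : R ≤ ‖a‖) (hb : R ≤ ‖b‖)
    (hab : ‖a - b‖ ≤ δ) (hβ0 : 0 ≤ β) (hβ1 : β ≤ 1) :
    ‖(b ^ 2)⁻¹ - (a ^ 2)⁻¹‖ ≤ 4 / R ^ 2 * (δ / R) ^ β := by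
  have h_sum : ‖b⁻¹ + a⁻¹‖ ≤ 2 / R := by
    calc ‖b⁻¹ + a⁻¹‖ ≤ ‖b⁻¹‖ + ‖a⁻¹‖ := norm_add_le _ _
      _ ≤ R⁻¹ + R⁻¹ := by
        rw [norm_inv, norm_inv]
        gcongr
      _ = 2 / R := by ring
  calc ‖(b ^ 2)⁻¹ - (a ^ 2)⁻¹‖ = ‖b⁻¹ + a⁻¹‖ * ‖b⁻¹ - a⁻¹‖ := by
        rw [← norm_mul, ← sq_sub_sq, inv_pow, inv_pow]
    _ ≤ 2 / R * (2 / R * (δ / R) ^ β) :=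
        mul_le_mul h_sum (norm_inv_sub_inv_le_rpow hR ha hb hab hβ0 hβ1) (norm_nonneg _)
          (by positivity)
    _ = 4 / R ^ 2 * (δ / R) ^ β := by ring

theorem sq_mul_norm_inv_sq_sub_inv_sq_le_rpow {κ r : ℝ} (hκ : 0 < κ) (hr : 0 < r)
    (ha : κ * r ^ 2 ≤ ‖a‖) (hb : κ * r ^ 2 ≤ ‖b‖) (hab : ‖a - b‖ ≤ δ) (hβ0 : 0 ≤ β)
    (hβ1 : β ≤ 1) :
    r ^ 2 * ‖(b ^ 2)⁻¹ - (a ^ 2)⁻¹‖ ≤ 4 / κ ^ 2 * (δ / κ) ^ β * r ^ (-(2 + 2 * β)) := by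
  have hδ : 0 ≤ δ := (norm_nonneg _).trans hab
  have h_split : (δ / (κ * r ^ 2)) ^ β = (δ / κ) ^ β * (r ^ (2 * β))⁻¹ := by
    rw [← div_div, Real.div_rpow (by positivity) (by positivity), ← Real.rpow_natCast_mul hr.le,
      div_eq_mul_inv, Nat.cast_ofNat]
  have h_rpow : r ^ (-(2 + 2 * β)) = (r ^ 2)⁻¹ * (r ^ (2 * β))⁻¹ := by
    rw [Real.rpow_neg hr.le, Real.rpow_add hr, mul_inv, Real.rpow_two]
  calc r ^ 2 * ‖(b ^ 2)⁻¹ - (a ^ 2)⁻¹‖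
      ≤ r ^ 2 * (4 / (κ * r ^ 2) ^ 2 * (δ / (κ * r ^ 2)) ^ β) := by
        gcongr
        exact norm_inv_sq_sub_inv_sq_le_rpow (by positivity) ha hb hab hβ0 hβ1
    _ = 4 / κ ^ 2 * (δ / κ) ^ β * r ^ (-(2 + 2 * β)) := by
        rw [h_split, h_rpow]
        field_simp

end InverseSquares

section Integrals

theorem lintegral_pi_prod_eq_prod {n : ℕ} {α : Type*} [MeasurableSpace α]
    (μ : Fin n → Measure α) [∀ i, SigmaFinite (μ i)] {f : Fin n → α → ℝ≥0∞}
    (hf : ∀ i, Measurable (f i)) :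
    ∫⁻ x, ∏ i, f i (x i) ∂Measure.pi μ = ∏ i, ∫⁻ t, f i t ∂μ i := by
  induction n with
  | zero => simp
  | succ n ih =>
    have h_tail : Measurable fun y : Fin n → α ↦ ∏ i, f i.succ (y i) :=
      Finset.measurable_fun_prod _ fun i _ ↦ (hf i.succ).comp (measurable_pi_apply i)
    rw [← (measurePreserving_piFinSuccAbove μ 0).symm.lintegral_comp_emb
      (MeasurableEquiv.measurableEmbedding _)]
    simp only [Fin.prod_univ_succ, MeasurableEquiv.piFinSuccAbove_symm_apply, Fin.insertNthEquiv,
      Fin.zero_succAbove, Equiv.coe_fn_mk, Fin.insertNth_zero', Fin.cons_zero, Fin.cons_succ]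
    rw [← ih (fun i ↦ μ i.succ) fun i ↦ hf i.succ]
    exact lintegral_prod_mul (hf 0).aemeasurable h_tail.aemeasurable

theorem setLIntegral_comp_hausdorffMeasure_le {X Y : Type*} [EMetricSpace X] [MeasurableSpace X]
    [BorelSpace X] [EMetricSpace Y] [MeasurableSpace Y] [BorelSpace Y] {E : Set X} {B : Set Y}
    {F : X → Y} {K : ℝ≥0} {d : ℝ} {G : Y → ℝ≥0∞} (hF : Measurable F)
    (hK : AntilipschitzWith K (E.domRestrict F)) (hEB : MapsTo F E B) (hd : 0 ≤ d)
    (hG : Measurable G) :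
    ∫⁻ x in E, G (F x) ∂μH[d] ≤ (K : ℝ≥0∞) ^ d * ∫⁻ y in B, G y ∂μH[d] := by
  have h_map : (μH[d].restrict E).map F ≤ (K : ℝ≥0∞) ^ d • μH[d].restrict B := by
    refine Measure.le_iff.2 fun A hA ↦ ?_
    have h_image : F ⁻¹' A ∩ E = Subtype.val '' (E.domRestrict F ⁻¹' (A ∩ B)) := by
      ext x
      simp only [mem_inter_iff, mem_preimage, mem_image, Subtype.exists, domRestrict_apply]
      exact ⟨fun h ↦ ⟨x, h.2, ⟨h.1, hEB h.2⟩, rfl⟩, by rintro ⟨_, hx, h, rfl⟩; exact ⟨h.1, hx⟩⟩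
    rw [Measure.map_apply hF hA, Measure.restrict_apply (hF hA), h_image,
      isometry_subtype_coe.hausdorffMeasure_image (.inl hd), Measure.smul_apply, smul_eq_mul,
      Measure.restrict_apply hA]
    exact hK.hausdorffMeasure_preimage_le hd _
  rw [← lintegral_map hG hF, ← smul_eq_mul, ← lintegral_smul_measure]
  exact lintegral_mono' h_map le_rfl

theorem setLIntegral_enorm_rpow_neg_lt_top {E : Type*} [NormedAddCommGroup E] [NormedSpace ℝ E]
    [FiniteDimensional ℝ E] [Nontrivial E] [MeasurableSpace E] [BorelSpace E] {μ : Measure E}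
    [μ.IsAddHaarMeasure] {γ : ℝ} (hγ : γ < Module.finrank ℝ E) {s : Set E} (hs : IsCompact s) :
    ∫⁻ x in s, ‖x‖ₑ ^ (-γ) ∂μ < ∞ := by
  have h_int : LocallyIntegrable (fun x : E ↦ ‖x‖ ^ (-γ)) μ :=
    locallyIntegrable_of_norm_le_rpow (C := 1) Module.finrank_pos hγ
      (.of_forall fun x ↦ by simp [Real.abs_rpow_of_nonneg])
      (measurable_norm.pow_const _).aestronglyMeasurable
  refine lt_of_eq_of_lt (lintegral_congr_ae ?_) (h_int.integrableOn_isCompact hs).2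
  filter_upwards [ae_restrict_of_ae (compl_mem_ae_iff.2 (measure_singleton (0 : E)))] with x hx
  rw [Real.enorm_of_nonneg (by positivity), ← ENNReal.ofReal_rpow_of_pos (norm_pos_iff.2 hx),
    ofReal_norm]

theorem setLIntegral_enorm_sub_rpow_le {E : Type*} [NormedAddCommGroup E] [MeasurableSpace E]
    [BorelSpace E] {μ : Measure E} [μ.IsAddRightInvariant] {c : E} {r R : ℝ} (hc : ‖c‖ ≤ r)
    (p : ℝ) :
    ∫⁻ x in closedBall 0 R, ‖x - c‖ₑ ^ p ∂μ ≤ ∫⁻ x in closedBall 0 (R + r), ‖x‖ₑ ^ p ∂μ := by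
  have h_preimage :
      (· - c) ⁻¹' closedBall (0 : E) (R + r) ⊇ closedBall 0 R := fun x hx ↦ by
    rw [mem_preimage, mem_closedBall_zero_iff]
    exact (norm_sub_le x c).trans (add_le_add (mem_closedBall_zero_iff.1 hx) hc)
  calc ∫⁻ x in closedBall 0 R, ‖x - c‖ₑ ^ p ∂μ
      ≤ ∫⁻ x in (· - c) ⁻¹' closedBall (0 : E) (R + r), ‖x - c‖ₑ ^ p ∂μ :=
        lintegral_mono_set h_preimage
    _ = ∫⁻ x in closedBall 0 (R + r), ‖x‖ₑ ^ p ∂μ :=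
        (measurePreserving_sub_right μ c).setLIntegral_comp_preimage_emb
          (MeasurableEquiv.subRight c).measurableEmbedding (fun x ↦ ‖x‖ₑ ^ p) _

theorem rpow_mul_rpow_le_rpow_add {a p : ℝ} (ha : 0 ≤ a) (hp : 0 ≤ p) (x y : ℝ≥0∞) :
    x ^ a * y ^ p ≤ x ^ (a + p) + y ^ (a + p) := by
  rcases le_total x y with h | h
  · calc x ^ a * y ^ p ≤ y ^ a * y ^ p := by gcongr
      _ = y ^ (a + p) := (ENNReal.rpow_add_of_nonneg a p ha hp).symm
      _ ≤ x ^ (a + p) + y ^ (a + p) := le_add_self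
  · calc x ^ a * y ^ p ≤ x ^ a * x ^ p := by gcongr
      _ = x ^ (a + p) := (ENNReal.rpow_add_of_nonneg a p ha hp).symm
      _ ≤ x ^ (a + p) + y ^ (a + p) := le_self_add

end Integrals

section SingularKernel

/-- A one-dimensional majorant with singularities of order `γ` at `0` and at `c`; products of such
kernels over the coordinates dominate the weighted kernels on a superellipsoid in its charts. -/
def singularKernel (γ : ℝ) (B : ℝ≥0∞) (c t : ℝ) : ℝ≥0∞ := B + ‖t‖ₑ ^ (-γ) + ‖t - c‖ₑ ^ (-γ)

variable {γ : ℝ} {B : ℝ≥0∞}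

@[fun_prop]
theorem measurable_singularKernel (c : ℝ) : Measurable (singularKernel γ B c) := by
  unfold singularKernel
  fun_prop

theorem exists_setLIntegral_singularKernel_le (hγ : γ < 1) (hB : B ≠ ∞) :
    ∃ M ≠ ∞, ∀ c : ℝ, |c| ≤ 1 → ∫⁻ t in closedBall 0 1, singularKernel γ B c t ≤ M := by
  have h_fin (R : ℝ) : ∫⁻ t in closedBall (0 : ℝ) R, ‖t‖ₑ ^ (-γ) ≠ ∞ :=
    (setLIntegral_enorm_rpow_neg_lt_top (by simpa using hγ) (isCompact_closedBall 0 R)).ne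
  refine ⟨B * volume (closedBall (0 : ℝ) 1) + (∫⁻ t in closedBall (0 : ℝ) 1, ‖t‖ₑ ^ (-γ))
    + ∫⁻ t in closedBall (0 : ℝ) (1 + 1), ‖t‖ₑ ^ (-γ), ?_, fun c hc ↦ ?_⟩
  · exact ENNReal.add_ne_top.2 ⟨ENNReal.add_ne_top.2
      ⟨ENNReal.mul_ne_top hB measure_closedBall_lt_top.ne, h_fin 1⟩, h_fin _⟩
  · simp only [singularKernel]
    rw [lintegral_add_left (by fun_prop), lintegral_add_left (by fun_prop), setLIntegral_const]
    exact add_le_add_right (setLIntegral_enorm_sub_rpow_le (μ := volume) (c := c) hc _) _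

theorem exists_setLIntegral_prod_singularKernel_le (n : ℕ) (hγ : γ < 1) (hB : B ≠ ∞) :
    ∃ M ≠ ∞, ∀ c : Fin n → ℝ, (∀ k, |c k| ≤ 1) →
      ∫⁻ t in closedBall (0 : Fin n → ℝ) 1, ∏ k, singularKernel γ B (c k) (t k) ≤ M := by
  obtain ⟨M, hM, h⟩ := exists_setLIntegral_singularKernel_le hγ hB
  refine ⟨M ^ n, ENNReal.pow_ne_top hM, fun c hc ↦ ?_⟩
  have h_restrict : (volume : Measure (Fin n → ℝ)).restrict (closedBall 0 1) =
      Measure.pi fun _ ↦ (volume : Measure ℝ).restrict (closedBall 0 1) := by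
    rw [closedBall_pi _ zero_le_one, volume_pi, Measure.restrict_pi_pi]
    rfl
  rw [h_restrict, lintegral_pi_prod_eq_prod _ fun k ↦ measurable_singularKernel (c k)]
  exact (Finset.prod_le_pow_card _ _ M fun k _ ↦ h (c k) (hc k)).trans_eq (by simp)

theorem rpow_mul_rpow_le_prod {ι : Type*} [Fintype ι] {a : ℝ} (ha : 0 ≤ a) (haγ : a ≤ γ)
    {x y : ℝ≥0∞} {f : ι → ℝ≥0∞} {k₀ : ι} (h₀ : x ^ γ + y ^ γ ≤ f k₀) (h : ∀ k, y ^ γ ≤ f k) :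
    x ^ a * y ^ (Fintype.card ι * γ - a) ≤ ∏ k, f k := by
  classical
  have h_card : (Fintype.card ι : ℝ) = (Finset.univ.erase k₀).card + 1 := by
    rw [← Finset.card_univ, ← Finset.card_erase_add_one (Finset.mem_univ k₀), Nat.cast_add_one]
  have h_exp : Fintype.card ι * γ - a = (γ - a) + γ * (Finset.univ.erase k₀).card := by
    rw [h_card]
    ring
  have hγ0 : 0 ≤ γ := ha.trans haγ
  rw [h_exp, ENNReal.rpow_add_of_nonneg _ _ (sub_nonneg.2 haγ) (by positivity), ← mul_assoc,
    ENNReal.rpow_mul, ENNReal.rpow_natCast, ← Finset.mul_prod_erase _ f (Finset.mem_univ k₀)]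
  gcongr
  · calc x ^ a * y ^ (γ - a) ≤ x ^ (a + (γ - a)) + y ^ (a + (γ - a)) :=
          rpow_mul_rpow_le_rpow_add ha (sub_nonneg.2 haγ) x y
      _ ≤ f k₀ := by rwa [add_sub_cancel]
  · exact Finset.pow_card_le_prod _ _ _ fun k _ ↦ h k

end SingularKernel

section Superellipsoid

/-- The superellipsoid `∑ⱼ |xⱼ|^(pⱼ) = 1` in Euclidean space. In real coordinates, `bDm m` is the
one with exponents `(m, 2, 2, 2)`. -/
def superellipsoid {ι : Type*} [Fintype ι] (p : ι → ℝ) : Set (EuclideanSpace ℝ ι) :=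
  {x | ∑ j, |x j| ^ p j = 1}

/-- The part of the superellipsoid where the `i`-th coordinate has sign `σ` and modulus at least
`δ`; there the other coordinates are a chart. -/
def superellipsoidCap {ι : Type*} [Fintype ι] (p : ι → ℝ) (i : ι) (σ : ℤˣ) (δ : ℝ) :
    Set (EuclideanSpace ℝ ι) :=
  {x ∈ superellipsoid p | δ ≤ σ * x i}

theorem abs_units_mul (σ : ℤˣ) (x : ℝ) : |(σ : ℝ) * x| = |x| := by
  rcases Int.units_eq_one_or σ with rfl | rfl <;> simp

variable {ι : Type*} [Fintype ι] {p : ι → ℝ} {x : EuclideanSpace ℝ ι}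

theorem abs_apply_le_one_of_mem_superellipsoid (hp : ∀ j, 0 < p j) (hx : x ∈ superellipsoid p)
    (j : ι) : |x j| ≤ 1 := by
  by_contra! h
  have h_le : |x j| ^ p j ≤ 1 := (Finset.single_le_sum (f := fun j ↦ |x j| ^ p j)
    (fun k _ ↦ Real.rpow_nonneg (abs_nonneg _) _) (Finset.mem_univ j)).trans_eq hx
  exact h_le.not_gt (Real.one_lt_rpow h (hp j))

theorem exists_inv_card_le_abs_apply (hp : ∀ j, 1 ≤ p j) (hx : x ∈ superellipsoid p) :
    ∃ i, (Fintype.card ι : ℝ)⁻¹ ≤ |x i| := by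
  have h_abs := abs_apply_le_one_of_mem_superellipsoid (fun j ↦ one_pos.trans_le (hp j)) hx
  have h_nonempty : (Finset.univ : Finset ι).Nonempty := by
    by_contra! h
    have h_sum : ∑ j, |x j| ^ p j = 1 := hx
    simp [h] at h_sum
  have h_card : (Fintype.card ι : ℝ) ≠ 0 :=
    Nat.cast_ne_zero.2 (Finset.card_pos.2 h_nonempty).ne'
  obtain ⟨i, -, hi⟩ := Finset.exists_le_of_sum_le (f := fun _ ↦ (Fintype.card ι : ℝ)⁻¹)
    (g := fun i ↦ |x i| ^ p i) h_nonempty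
    (by simpa [Finset.card_univ, h_card] using (show ∑ j, |x j| ^ p j = 1 from hx).ge)
  exact ⟨i, hi.trans (Real.rpow_le_self_of_le_one (abs_nonneg _) (h_abs i) (hp i))⟩

theorem superellipsoid_subset_iUnion_cap (hp : ∀ j, 1 ≤ p j) :
    superellipsoid p ⊆
      ⋃ s : ι × ℤˣ, superellipsoidCap p s.1 s.2 (Fintype.card ι : ℝ)⁻¹ := by
  intro x hx
  obtain ⟨i, hi⟩ := exists_inv_card_le_abs_apply hp hx
  rcases abs_cases (x i) with ⟨h, -⟩ | ⟨h, -⟩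
  · exact mem_iUnion.2 ⟨(i, 1), hx, by simpa [h] using hi⟩
  · exact mem_iUnion.2 ⟨(i, -1), hx, by simpa [h] using hi⟩

theorem norm_le_sum_norm_apply (x : EuclideanSpace ℝ ι) : ‖x‖ ≤ ∑ j, ‖x j‖ := by
  have h_nonneg : ∀ j ∈ Finset.univ, 0 ≤ ‖x j‖ := fun j _ ↦ norm_nonneg (x j)
  rw [EuclideanSpace.norm_eq, Real.sqrt_le_left (Finset.sum_nonneg h_nonneg)]
  exact Finset.sum_sq_le_sq_sum_of_nonneg h_nonneg

end Superellipsoid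

section SuperellipsoidChart

variable {n : ℕ} {p : Fin (n + 1) → ℝ} {x y : EuclideanSpace ℝ (Fin (n + 1))} {i : Fin (n + 1)}
  {σ : ℤˣ}

theorem abs_rpow_sub_rpow_apply_eq_of_mem_superellipsoid
    (hx : x ∈ superellipsoid p) (hy : y ∈ superellipsoid p) (i : Fin (n + 1)) :
    |x i| ^ p i - |y i| ^ p i =
      ∑ k, (|y (i.succAbove k)| ^ p (i.succAbove k) - |x (i.succAbove k)| ^ p (i.succAbove k)) := by
  have h : ∑ j, |x j| ^ p j = ∑ j, |y j| ^ p j := hx.trans hy.symm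
  rw [Fin.sum_univ_succAbove _ i, Fin.sum_univ_succAbove _ i] at h
  rw [Finset.sum_sub_distrib]
  linarith

theorem coe_le_enorm_apply_of_mem_cap {δ : ℝ≥0} (hx : x ∈ superellipsoidCap p i σ δ) :
    (δ : ℝ≥0∞) ≤ ‖x i‖ₑ := by
  have h : (δ : ℝ) ≤ ‖x i‖ := (hx.2.trans (le_abs_self _)).trans_eq (abs_units_mul σ _)
  rw [enorm_eq_nnnorm]
  exact_mod_cast h

theorem mul_abs_sub_apply_le_of_mem_cap {δ : ℝ} (hp1 : ∀ j, 1 < p j) (hp2 : ∀ j, p j ≤ 2)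
    (hδ : 0 < δ) (hx : x ∈ superellipsoidCap p i σ δ) (hy : y ∈ superellipsoidCap p i σ δ) :
    δ * |x i - y i| ≤ 2 * n * dist (i.removeNth x) (i.removeNth y) := by
  have hp0 (j) : 0 < p j := one_pos.trans (hp1 j)
  have hx1 := abs_apply_le_one_of_mem_superellipsoid hp0 hx.1
  have hy1 := abs_apply_le_one_of_mem_superellipsoid hp0 hy.1
  have h_abs {z : EuclideanSpace ℝ (Fin (n + 1))} (hz : z ∈ superellipsoidCap p i σ δ) :
      σ * z i = |z i| := by
    rw [← abs_units_mul σ, abs_of_pos (hδ.trans_le hz.2)]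
  calc δ * |x i - y i| = δ * |(|x i| - |y i|)| := by
        rw [← abs_units_mul σ, mul_sub, h_abs hx, h_abs hy]
    _ ≤ |(|x i| ^ p i - |y i| ^ p i)| :=
        mul_abs_sub_le_abs_rpow_sub_rpow (hp1 i) (hp2 i) hδ ⟨h_abs hx ▸ hx.2, hx1 i⟩
          ⟨h_abs hy ▸ hy.2, hy1 i⟩
    _ ≤ ∑ k, |(|y (i.succAbove k)| ^ p (i.succAbove k)
          - |x (i.succAbove k)| ^ p (i.succAbove k))| := by
        rw [abs_rpow_sub_rpow_apply_eq_of_mem_superellipsoid hx.1 hy.1]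
        exact Finset.abs_sum_le_sum_abs _ _
    _ ≤ ∑ _k : Fin n, 2 * dist (i.removeNth x) (i.removeNth y) := by
        gcongr with k
        refine (abs_abs_rpow_sub_abs_rpow_le (hp1 _) (hp2 _) (hy1 _) (hx1 _)).trans ?_
        rw [abs_sub_comm]
        gcongr
        exact dist_le_pi_dist (i.removeNth x) (i.removeNth y) k
    _ = 2 * n * dist (i.removeNth x) (i.removeNth y) := by
        rw [Finset.sum_const, Finset.card_fin, nsmul_eq_mul]
        ring

theorem antilipschitzWith_removeNth_cap {δ : ℝ≥0} (hp1 : ∀ j, 1 < p j) (hp2 : ∀ j, p j ≤ 2)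
    (hδ : 0 < δ) :
    AntilipschitzWith (2 * n / δ + n)
      ((superellipsoidCap p i σ δ).domRestrict fun x ↦ i.removeNth (x : Fin (n + 1) → ℝ)) := by
  refine AntilipschitzWith.of_le_mul_dist fun ⟨x, hx⟩ ⟨y, hy⟩ ↦ ?_
  simp only [domRestrict_apply, Subtype.dist_eq, dist_eq_norm x y]
  set D := dist (i.removeNth (x : Fin (n + 1) → ℝ)) (i.removeNth y)
  have h_i : ‖(x - y) i‖ ≤ 2 * n / δ * D := by
    rw [div_mul_eq_mul_div, le_div_iff₀ (NNReal.coe_pos.2 hδ), mul_comm ‖_‖]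
    exact mul_abs_sub_apply_le_of_mem_cap hp1 hp2 hδ hx hy
  have h_others : ∑ k, ‖(x - y) (i.succAbove k)‖ ≤ n * D := by
    refine (Finset.sum_le_card_nsmul _ _ D fun k _ ↦ ?_).trans_eq (by simp)
    exact dist_le_pi_dist (i.removeNth x) (i.removeNth y) k
  calc ‖x - y‖ ≤ ‖(x - y) i‖ + ∑ k, ‖(x - y) (i.succAbove k)‖ :=
        (norm_le_sum_norm_apply _).trans_eq (Fin.sum_univ_succAbove _ i)
    _ ≤ 2 * n / δ * D + n * D := add_le_add h_i h_others
    _ = ((2 * n / δ + n : ℝ≥0) : ℝ) * D := by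
        push_cast
        ring

theorem rpow_mul_rpow_le_prod_singularKernel [NeZero n] {a γ : ℝ} (ha : 0 ≤ a) (haγ : a ≤ γ)
    {B : ℝ≥0∞} {j₀ : Fin (n + 1)} (hx : ‖x i‖ₑ ^ (-γ) ≤ B) (c : EuclideanSpace ℝ (Fin (n + 1))) :
    ‖x j₀‖ₑ ^ (-a) * ‖x - c‖ₑ ^ (-(n * γ - a)) ≤
      ∏ k, singularKernel γ B (i.removeNth c k) (i.removeNth x k) := by
  have hγ : 0 ≤ γ := ha.trans haγ
  have h_sub (k : Fin n) :
      ‖x - c‖ₑ⁻¹ ^ γ ≤ ‖i.removeNth x k - i.removeNth c k‖ₑ ^ (-γ) := by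
    rw [ENNReal.rpow_neg, ← ENNReal.inv_rpow]
    gcongr
    exact PiLp.enorm_apply_le (x - c) (i.succAbove k)
  obtain ⟨k₀, hk₀⟩ : ∃ k₀ : Fin n, ‖x j₀‖ₑ⁻¹ ^ γ ≤ B + ‖i.removeNth x k₀‖ₑ ^ (-γ) := by
    rw [ENNReal.inv_rpow, ← ENNReal.rpow_neg]
    rcases Fin.eq_self_or_eq_succAbove i j₀ with rfl | ⟨k, rfl⟩
    · exact ⟨0, hx.trans le_self_add⟩
    · exact ⟨k, le_add_self⟩
  rw [ENNReal.rpow_neg, ENNReal.rpow_neg, ← ENNReal.inv_rpow, ← ENNReal.inv_rpow]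
  simpa only [Fintype.card_fin] using
    rpow_mul_rpow_le_prod (f := fun k ↦ singularKernel γ B (i.removeNth c k) (i.removeNth x k))
      ha haγ (add_le_add hk₀ (h_sub k₀)) fun k ↦ (h_sub k).trans le_add_self

theorem exists_setLIntegral_cap_le [NeZero n] {a γ : ℝ} {δ : ℝ≥0} (hp1 : ∀ j, 1 < p j)
    (hp2 : ∀ j, p j ≤ 2) (ha : 0 ≤ a) (haγ : a ≤ γ) (hγ : γ < 1) (hδ : 0 < δ)
    (i j₀ : Fin (n + 1)) (σ : ℤˣ) :
    ∃ M ≠ ∞, ∀ c ∈ superellipsoid p,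
      ∫⁻ x in superellipsoidCap p i σ δ, ‖x j₀‖ₑ ^ (-a) * ‖x - c‖ₑ ^ (-(n * γ - a)) ∂μH[n]
        ≤ M := by
  have hp0 (j) : 0 < p j := one_pos.trans (hp1 j)
  have hB : (δ : ℝ≥0∞) ^ (-γ) ≠ ∞ := by
    simp [ENNReal.rpow_eq_top_iff, hδ.ne']
  obtain ⟨M, hM, h_int⟩ := exists_setLIntegral_prod_singularKernel_le n hγ hB
  refine ⟨((2 * n / δ + n : ℝ≥0) : ℝ≥0∞) ^ (n : ℝ) * M, by finiteness, fun c hc ↦ ?_⟩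
  let chart (x : EuclideanSpace ℝ (Fin (n + 1))) : Fin n → ℝ := i.removeNth x
  let G (t : Fin n → ℝ) : ℝ≥0∞ := ∏ k, singularKernel γ (δ ^ (-γ)) (chart c k) (t k)
  have h_chart : Measurable chart := by
    unfold chart Fin.removeNth
    fun_prop
  have hG : Measurable G := by fun_prop
  have h_le (x) (hx : x ∈ superellipsoidCap p i σ δ) :
      ‖x j₀‖ₑ ^ (-a) * ‖x - c‖ₑ ^ (-(n * γ - a)) ≤ G (chart x) := by
    refine rpow_mul_rpow_le_prod_singularKernel ha haγ ?_ c
    rw [ENNReal.rpow_neg, ENNReal.rpow_neg]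
    gcongr
    · exact ha.trans haγ
    · exact coe_le_enorm_apply_of_mem_cap hx
  have h_maps : MapsTo chart (superellipsoidCap p i σ δ) (closedBall 0 1) := fun x hx ↦ by
    rw [mem_closedBall_zero_iff, pi_norm_le_iff_of_nonneg zero_le_one]
    exact fun k ↦ abs_apply_le_one_of_mem_superellipsoid hp0 hx.1 _
  calc ∫⁻ x in superellipsoidCap p i σ δ, ‖x j₀‖ₑ ^ (-a) * ‖x - c‖ₑ ^ (-(n * γ - a)) ∂μH[n]
      ≤ ∫⁻ x in superellipsoidCap p i σ δ, G (chart x) ∂μH[n] :=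
        setLIntegral_mono (hG.comp h_chart) h_le
    _ ≤ ((2 * n / δ + n : ℝ≥0) : ℝ≥0∞) ^ (n : ℝ) * ∫⁻ t in closedBall 0 1, G t ∂μH[n] :=
        setLIntegral_comp_hausdorffMeasure_le h_chart (antilipschitzWith_removeNth_cap hp1 hp2 hδ)
          h_maps n.cast_nonneg hG
    _ ≤ ((2 * n / δ + n : ℝ≥0) : ℝ≥0∞) ^ (n : ℝ) * M := by
        have h_vol : (μH[n] : Measure (Fin n → ℝ)) = volume := by
          simpa using hausdorffMeasure_pi_real (ι := Fin n)
        rw [h_vol]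
        gcongr
        exact h_int _ fun k ↦ abs_apply_le_one_of_mem_superellipsoid hp0 hc _

theorem exists_setLIntegral_superellipsoid_le [NeZero n] {a γ : ℝ} (hp1 : ∀ j, 1 < p j)
    (hp2 : ∀ j, p j ≤ 2) (ha : 0 ≤ a) (haγ : a ≤ γ) (hγ : γ < 1) (j₀ : Fin (n + 1)) :
    ∃ M ≠ ∞, ∀ c ∈ superellipsoid p,
      ∫⁻ x in superellipsoid p, ‖x j₀‖ₑ ^ (-a) * ‖x - c‖ₑ ^ (-(n * γ - a)) ∂μH[n] ≤ M := by
  have hδ : (0 : ℝ≥0) < (Fintype.card (Fin (n + 1)) : ℝ≥0)⁻¹ := by simp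
  choose M hM h_cap using fun s : Fin (n + 1) × ℤˣ ↦
    exists_setLIntegral_cap_le hp1 hp2 ha haγ hγ hδ s.1 j₀ s.2
  refine ⟨∑ s, M s, ENNReal.sum_ne_top.2 fun s _ ↦ hM s, fun c hc ↦ ?_⟩
  refine (lintegral_mono_set (superellipsoid_subset_iUnion_cap fun j ↦ (hp1 j).le)).trans ?_
  refine (lintegral_iUnion_le _ _).trans ?_
  rw [tsum_fintype]
  exact Finset.sum_le_sum fun s _ ↦ h_cap s c hc

end SuperellipsoidChart

section Boundary

/-- The real coordinates `(Re w₁, Im w₁, Re w₂, Im w₂)` on `ℂ²`. -/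
def realCoords (w : C2) : EuclideanSpace ℝ (Fin 4) :=
  !₂[(w 0).re, (w 0).im, (w 1).re, (w 1).im]

theorem norm_sq_eq_realCoords (w : C2) :
    ‖w‖ ^ 2 = (w 0).re ^ 2 + (w 0).im ^ 2 + (w 1).re ^ 2 + (w 1).im ^ 2 := by
  simp only [EuclideanSpace.norm_sq_eq, Fin.sum_univ_two, ← Complex.normSq_eq_norm_sq,
    Complex.normSq_apply]
  ring

theorem re_inner_eq_realCoords (w z : C2) :
    (inner ℂ w z).re = (w 0).re * (z 0).re + (w 0).im * (z 0).im + (w 1).re * (z 1).re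
      + (w 1).im * (z 1).im := by
  simp only [PiLp.inner_apply, Fin.sum_univ_two, RCLike.inner_apply, add_re, mul_re, conj_re,
    conj_im]
  ring

theorem isometry_realCoords : Isometry realCoords := by
  refine Isometry.of_dist_eq fun w z ↦ ?_
  rw [dist_eq_norm, dist_eq_norm, ← sq_eq_sq₀ (norm_nonneg _) (norm_nonneg _),
    norm_sq_eq_realCoords, EuclideanSpace.norm_sq_eq, Fin.sum_univ_four]
  simp [realCoords]

theorem norm_realCoords_sub (w z : C2) : ‖realCoords w - realCoords z‖ = ‖w - z‖ := by
  simpa only [dist_eq_norm] using isometry_realCoords.dist_eq w z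

variable {m : ℝ} {w z : C2}

theorem rhom_eq_realCoords (m : ℝ) (w : C2) :
    rhom m w = |(w 0).re| ^ m + (w 0).im ^ 2 + (w 1).re ^ 2 + (w 1).im ^ 2 - 1 := by
  rw [rhom, ← Complex.normSq_eq_norm_sq, Complex.normSq_apply]
  ring

theorem mem_bDm_iff_realCoords_mem_superellipsoid :
    w ∈ bDm m ↔ realCoords w ∈ superellipsoid ![m, 2, 2, 2] := by
  simp [bDm, superellipsoid, rhom_eq_realCoords, realCoords, Fin.sum_univ_four, sub_eq_zero]

theorem abs_re_le_one_of_mem_bDm (hm : 0 < m) (hw : w ∈ bDm m) : |(w 0).re| ≤ 1 :=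
  abs_apply_le_one_of_mem_superellipsoid (by simp [Fin.forall_fin_succ, hm])
    (mem_bDm_iff_realCoords_mem_superellipsoid.1 hw) 0

theorem exists_setLIntegral_bDm_le {a γ : ℝ} (hm1 : 1 < m) (hm2 : m ≤ 2) (ha : 0 ≤ a)
    (haγ : a ≤ γ) (hγ : γ < 1) :
    ∃ M ≠ ∞, ∀ z ∈ bDm m,
      ∫⁻ w in bDm m, ‖(w 0).re‖ₑ ^ (-a) * ‖w - z‖ₑ ^ (-(3 * γ - a)) ∂μH[3] ≤ M := by
  obtain ⟨M, hM, h⟩ := exists_setLIntegral_superellipsoid_le (p := ![m, 2, 2, 2])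
    (by simp [Fin.forall_fin_succ, hm1]) (by simp [Fin.forall_fin_succ, hm2]) ha haγ hγ 0
  refine ⟨M, hM, fun z hz ↦ ?_⟩
  let G (x : EuclideanSpace ℝ (Fin 4)) : ℝ≥0∞ :=
    ‖x 0‖ₑ ^ (-a) * ‖x - realCoords z‖ₑ ^ (-(3 * γ - a))
  have hG : Measurable G := by fun_prop
  calc ∫⁻ w in bDm m, ‖(w 0).re‖ₑ ^ (-a) * ‖w - z‖ₑ ^ (-(3 * γ - a)) ∂μH[3]
      = ∫⁻ w in bDm m, G (realCoords w) ∂μH[3] := by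
        simp only [G, ← ofReal_norm, norm_realCoords_sub]
        rfl
    _ ≤ ((1 : ℝ≥0) : ℝ≥0∞) ^ (3 : ℝ) * ∫⁻ x in superellipsoid ![m, 2, 2, 2], G x ∂μH[3] :=
        setLIntegral_comp_hausdorffMeasure_le isometry_realCoords.continuous.measurable
          (isometry_realCoords.antilipschitz.domRestrict _)
          (fun _ ↦ mem_bDm_iff_realCoords_mem_superellipsoid.1) (by norm_num) hG
    _ ≤ M := by
        simpa [G] using h _ (mem_bDm_iff_realCoords_mem_superellipsoid.1 hz)

end Boundary

section CauchyLeray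

variable {m : ℝ} {w z : C2}

theorem gradRhom_apply_zero (m : ℝ) (w : C2) :
    gradRhom m w 0 = ⟨m * signedRpow (m - 1) (w 0).re, 2 * (w 0).im⟩ := by
  apply Complex.ext <;> simp [gradRhom, signedRpow, mul_assoc]

theorem gradRhom_apply_one (m : ℝ) (w : C2) : gradRhom m w 1 = 2 * w 1 := rfl

theorem deltam_eq_inner (m : ℝ) (w z : C2) :
    Deltam m w z = 1 / 2 * inner ℂ (gradRhom m w) (w - z) := by
  rw [PiLp.inner_apply, Fin.sum_univ_two, gradRhom_apply_zero, gradRhom_apply_one]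
  apply Complex.ext <;> simp [Deltam, signedRpow] <;> ring

theorem rhom_sub_add_norm_sq_le_re_inner (hm1 : 1 < m) (hm2 : m ≤ 2) (hw : |(w 0).re| ≤ 1)
    (hz : |(z 0).re| ≤ 1) :
    rhom m w - rhom m z + m * (m - 1) / 2 * ‖w - z‖ ^ 2 ≤ (inner ℂ (gradRhom m w) (w - z)).re := by
  have h_re := abs_rpow_tangent_add_sq_le hm1 hm2 hw hz
  have h_coeff : m * (m - 1) / 2 ≤ 1 := by nlinarith
  have h_rest : m * (m - 1) / 2 *
        (((w 0).im - (z 0).im) ^ 2 + ((w 1).re - (z 1).re) ^ 2 + ((w 1).im - (z 1).im) ^ 2) ≤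
      ((w 0).im - (z 0).im) ^ 2 + ((w 1).re - (z 1).re) ^ 2 + ((w 1).im - (z 1).im) ^ 2 :=
    mul_le_of_le_one_left (by positivity) h_coeff
  rw [re_inner_eq_realCoords, norm_sq_eq_realCoords, rhom_eq_realCoords, rhom_eq_realCoords,
    gradRhom_apply_zero, gradRhom_apply_one]
  simp only [PiLp.sub_apply, sub_re, sub_im, mul_re, mul_im, re_ofNat, im_ofNat]
  linarith

theorem neg_two_mul_norm_sq_le_re_inner_gradRhom (hm1 : 1 < m) (hm2 : m ≤ 2) (hw : w ∈ bDm m)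
    (hz : z ∈ bDm m) :
    -2 * ‖w - z‖ ^ 2 ≤ (inner ℂ (gradRhom m w) (gradRhom m z)).re := by
  have hm0 : 0 < m := one_pos.trans hm1
  have h_re := neg_sub_sq_le_signedRpow_mul hm1 hm2 (abs_re_le_one_of_mem_bDm hm0 hw)
    (abs_re_le_one_of_mem_bDm hm0 hz)
  have hw0 := (rhom_eq_realCoords m w).symm.trans hw
  have hz0 := (rhom_eq_realCoords m z).symm.trans hz
  rw [re_inner_eq_realCoords, norm_sq_eq_realCoords, gradRhom_apply_zero, gradRhom_apply_zero,
    gradRhom_apply_one, gradRhom_apply_one]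
  simp only [PiLp.sub_apply, sub_re, sub_im, mul_re, mul_im, re_ofNat, im_ofNat]
  linarith

theorem norm_gradRhom_sq (hm1 : 1 < m) (hw : w ∈ bDm m) :
    ‖gradRhom m w‖ ^ 2 = m ^ 2 * (|(w 0).re| ^ (m - 1)) ^ 2 + 4 * (1 - |(w 0).re| ^ m) := by
  have hw0 := (rhom_eq_realCoords m w).symm.trans hw
  rw [norm_sq_eq_realCoords, gradRhom_apply_zero, gradRhom_apply_one,
    ← abs_signedRpow (by linarith), sq_abs]
  simp only [mul_re, mul_im, re_ofNat, im_ofNat]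
  linarith

theorem one_le_norm_gradRhom (hm1 : 1 < m) (hm2 : m ≤ 2) (hw : w ∈ bDm m) :
    1 ≤ ‖gradRhom m w‖ := by
  have hu := abs_re_le_one_of_mem_bDm (one_pos.trans hm1) hw
  have h_pow : |(w 0).re| ≤ |(w 0).re| ^ (m - 1) :=
    Real.self_le_rpow_of_le_one (abs_nonneg _) hu (by linarith)
  have h_sq : (w 0).re ^ 2 ≤ m ^ 2 * (|(w 0).re| ^ (m - 1)) ^ 2 := by
    rw [← sq_abs, ← mul_pow]
    gcongr
    nlinarith [abs_nonneg (w 0).re]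
  rw [← one_le_sq_iff₀ (norm_nonneg _), norm_gradRhom_sq hm1 hw]
  linarith [abs_rpow_le_half_add_sq hm1.le hu, (sq_le_one_iff_abs_le_one _).2 hu]

theorem norm_gradRhom_le (hm1 : 1 < m) (hm2 : m ≤ 2) (hw : w ∈ bDm m) : ‖gradRhom m w‖ ≤ 4 := by
  have hu := abs_re_le_one_of_mem_bDm (one_pos.trans hm1) hw
  have h_pow : (|(w 0).re| ^ (m - 1)) ^ 2 ≤ 1 :=
    pow_le_one₀ (by positivity) (Real.rpow_le_one (abs_nonneg _) hu (by linarith))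
  have h_nonneg : 0 ≤ |(w 0).re| ^ m := by positivity
  refine abs_le_of_sq_le_sq' ?_ (by norm_num) |>.2
  rw [norm_gradRhom_sq hm1 hw]
  nlinarith

theorem norm_nm_le_one (m : ℝ) (z : C2) : ‖Nm m z‖ ≤ 1 := by
  rw [Nm, norm_smul, norm_neg, norm_inv, norm_norm]
  exact inv_mul_le_one

theorem deltam_sub_deltam_add (m : ℝ) (w z v : C2) :
    Deltam m w z - Deltam m w (z + v) = 1 / 2 * inner ℂ (gradRhom m w) v := by
  rw [deltam_eq_inner, deltam_eq_inner, ← mul_sub, ← inner_sub_right]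
  congr 2
  abel

theorem norm_deltam_sub_deltam_add_smul_nm_le {ε : ℝ} (hm1 : 1 < m) (hm2 : m ≤ 2)
    (hw : w ∈ bDm m) (hε : 0 ≤ ε) :
    ‖Deltam m w z - Deltam m w (z + ε • Nm m z)‖ ≤ 2 * ε := by
  have h_shift : ‖ε • Nm m z‖ ≤ ε := by
    rw [norm_smul, Real.norm_of_nonneg hε]
    exact mul_le_of_le_one_right hε (norm_nm_le_one m z)
  have h_inner : ‖inner ℂ (gradRhom m w) (ε • Nm m z)‖ ≤ 4 * ε :=
    (norm_inner_le_norm _ _).trans (mul_le_mul (norm_gradRhom_le hm1 hm2 hw) h_shift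
      (norm_nonneg _) (by norm_num))
  have h_half : ‖(1 / 2 : ℂ)‖ = 1 / 2 := by norm_num
  rw [deltam_sub_deltam_add, norm_mul, h_half]
  linarith

theorem mul_norm_sq_le_re_deltam (hm1 : 1 < m) (hm2 : m ≤ 2) (hw : w ∈ bDm m) (hz : z ∈ bDm m) :
    m * (m - 1) / 4 * ‖w - z‖ ^ 2 ≤ (Deltam m w z).re := by
  have hm0 : 0 < m := one_pos.trans hm1
  have h := rhom_sub_add_norm_sq_le_re_inner hm1 hm2 (abs_re_le_one_of_mem_bDm hm0 hw)
    (abs_re_le_one_of_mem_bDm hm0 hz)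
  have hw0 : rhom m w = 0 := hw
  have hz0 : rhom m z = 0 := hz
  have h_re : (Deltam m w z).re = 1 / 2 * (inner ℂ (gradRhom m w) (w - z)).re := by
    rw [deltam_eq_inner]
    simp
  linarith

theorem re_deltam_sub_le_re_deltam_add_smul_nm {ε : ℝ} (hm1 : 1 < m) (hm2 : m ≤ 2)
    (hw : w ∈ bDm m) (hz : z ∈ bDm m) (hε : 0 ≤ ε) :
    (Deltam m w z).re - ε * ‖w - z‖ ^ 2 ≤ (Deltam m w (z + ε • Nm m z)).re := by
  set s := ε * ‖gradRhom m z‖⁻¹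
  have hs0 : 0 ≤ s := by positivity
  have hsε : s ≤ ε :=
    mul_le_of_le_one_right hε (inv_le_one_of_one_le₀ (one_le_norm_gradRhom hm1 hm2 hz))
  have h_normal : ε • Nm m z = ((-s : ℝ) : ℂ) • gradRhom m z := by
    rw [Nm, smul_smul, mul_neg]
    rfl
  have h_diff : (Deltam m w z).re - (Deltam m w (z + ε • Nm m z)).re =
      -(s / 2) * (inner ℂ (gradRhom m w) (gradRhom m z)).re := by
    have h_coeff : 1 / 2 * ((-s : ℝ) : ℂ) = (-(s / 2) : ℝ) := by
      push_cast
      ring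
    rw [← sub_re, deltam_sub_deltam_add, h_normal, inner_smul_right, ← mul_assoc, h_coeff,
      re_ofReal_mul]
  have h_inner := neg_two_mul_norm_sq_le_re_inner_gradRhom hm1 hm2 hw hz
  nlinarith [sq_nonneg ‖w - z‖]

variable {ε β : ℝ}

theorem mul_norm_sq_le_norm_deltam (hm1 : 1 < m) (hm2 : m ≤ 2) (hw : w ∈ bDm m) (hz : z ∈ bDm m) :
    m * (m - 1) / 8 * ‖w - z‖ ^ 2 ≤ ‖Deltam m w z‖ := by
  have h_pos : 0 ≤ m * (m - 1) / 8 * ‖w - z‖ ^ 2 :=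
    mul_nonneg (by nlinarith) (sq_nonneg _)
  linarith [mul_norm_sq_le_re_deltam hm1 hm2 hw hz, re_le_norm (Deltam m w z)]

theorem mul_norm_sq_le_norm_deltam_add_smul_nm (hm1 : 1 < m) (hm2 : m ≤ 2) (hw : w ∈ bDm m)
    (hz : z ∈ bDm m) (hε0 : 0 ≤ ε) (hε : ε ≤ m * (m - 1) / 8) :
    m * (m - 1) / 8 * ‖w - z‖ ^ 2 ≤ ‖Deltam m w (z + ε • Nm m z)‖ := by
  have h_loss : ε * ‖w - z‖ ^ 2 ≤ m * (m - 1) / 8 * ‖w - z‖ ^ 2 := by gcongr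
  linarith [mul_norm_sq_le_re_deltam hm1 hm2 hw hz,
    re_deltam_sub_le_re_deltam_add_smul_nm hm1 hm2 hw hz hε0,
    re_le_norm (Deltam m w (z + ε • Nm m z))]

theorem ite_deltam_le_enorm_rpow (hm1 : 1 < m) (hm2 : m ≤ 2) (hw : w ∈ bDm m) (hz : z ∈ bDm m)
    (hε0 : 0 < ε) (hε : ε ≤ m * (m - 1) / 8) (hβ0 : 0 ≤ β) (hβ1 : β ≤ 1) :
    (if Deltam m w z = 0 ∨ Deltam m w (z + ε • Nm m z) = 0 then (⊤ : ℝ≥0∞)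
      else ENNReal.ofReal (‖w - z‖ ^ 2 *
        ‖((Deltam m w (z + ε • Nm m z)) ^ 2)⁻¹ - ((Deltam m w z) ^ 2)⁻¹‖)) ≤
      ENNReal.ofReal (4 / (m * (m - 1) / 8) ^ 2 * (2 * ε / (m * (m - 1) / 8)) ^ β) *
        ‖w - z‖ₑ ^ (-(2 + 2 * β)) := by
  have hκ : 0 < m * (m - 1) / 8 := by nlinarith
  rcases eq_or_ne w z with rfl | hwz
  · have h_top : ‖w - w‖ₑ ^ (-(2 + 2 * β)) = ∞ := by
      rw [sub_self, enorm_zero, ENNReal.zero_rpow_of_neg (by linarith)]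
    rw [h_top, ENNReal.mul_top (ENNReal.ofReal_pos.2 (by positivity)).ne']
    exact le_top
  have hr : 0 < ‖w - z‖ := norm_pos_iff.2 (sub_ne_zero.2 hwz)
  have hR : 0 < m * (m - 1) / 8 * ‖w - z‖ ^ 2 := by positivity
  have h_z := mul_norm_sq_le_norm_deltam hm1 hm2 hw hz
  have h_zε := mul_norm_sq_le_norm_deltam_add_smul_nm hm1 hm2 hw hz hε0.le hε
  rw [if_neg (not_or.2 ⟨norm_pos_iff.1 (hR.trans_le h_z), norm_pos_iff.1 (hR.trans_le h_zε)⟩),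
    ← ofReal_norm, ENNReal.ofReal_rpow_of_pos hr, ← ENNReal.ofReal_mul (by positivity)]
  exact ENNReal.ofReal_le_ofReal (sq_mul_norm_inv_sq_sub_inv_sq_le_rpow hκ hr h_z h_zε
    (norm_deltam_sub_deltam_add_smul_nm_le hm1 hm2 hw hε0.le) hβ0 hβ1)

end CauchyLeray

theorem stmt17_general (m a β : ℝ) (hm1 : 1 < m) (hm2 : m ≤ 2) (ha : 0 ≤ a) (hβ : 0 ≤ β)
    (haβ : a + 2 * β < 1) :
    ∃ C ε₀ : ℝ, 0 < ε₀ ∧ ∀ z ∈ bDm m, ∀ ε : ℝ, 0 < ε → ε < ε₀ →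
      ∫⁻ w in bDm m,
          (ENNReal.ofReal |(w 0).re|) ^ (-a) *
            (if Deltam m w z = 0 ∨ Deltam m w (z + ε • Nm m z) = 0 then (⊤ : ℝ≥0∞)
              else ENNReal.ofReal (‖w - z‖ ^ 2 *
                ‖((Deltam m w (z + ε • Nm m z)) ^ 2)⁻¹ - ((Deltam m w z) ^ 2)⁻¹‖)) ∂μH[3]
        ≤ ENNReal.ofReal (C * ε ^ β) := by
  have hκ : 0 < m * (m - 1) / 8 := by nlinarith
  set κ := m * (m - 1) / 8
  obtain ⟨M, hM, h_int⟩ := exists_setLIntegral_bDm_le (γ := (a + 2 + 2 * β) / 3) hm1 hm2 ha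
    (by linarith) (by linarith)
  have h_exp : 3 * ((a + 2 + 2 * β) / 3) - a = 2 + 2 * β := by ring
  simp only [h_exp] at h_int
  refine ⟨4 / κ ^ 2 * (2 / κ) ^ β * M.toReal, κ, hκ, fun z hz ε hε0 hε ↦ ?_⟩
  have h_const : 4 / κ ^ 2 * (2 / κ) ^ β * M.toReal * ε ^ β =
      4 / κ ^ 2 * (2 * ε / κ) ^ β * M.toReal := by
    rw [mul_div_right_comm, Real.mul_rpow (by positivity) hε0.le]
    ring
  rw [h_const, ENNReal.ofReal_mul (by positivity), ENNReal.ofReal_toReal hM]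
  refine (setLIntegral_mono (g := fun w ↦ ENNReal.ofReal (4 / κ ^ 2 * (2 * ε / κ) ^ β) *
    (‖(w 0).re‖ₑ ^ (-a) * ‖w - z‖ₑ ^ (-(2 + 2 * β)))) (by fun_prop) fun w hw ↦ ?_).trans ?_
  · rw [mul_left_comm, ← Real.enorm_eq_ofReal_abs]
    gcongr
    exact ite_deltam_le_enorm_rpow hm1 hm2 hw hz hε0 hε.le hβ (by linarith)
  · rw [lintegral_const_mul _ (by fun_prop)]
    gcongr
    exact h_int z hz

/-- Fix `3/2 < m < 2` and `0 < β < m − 3/2`. There are `C < ∞`, `ε₀ > 0` such that for every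
`z ∈ bD_m` and `0 < ε < ε₀`:
`∫_{bD_m} |Re w₁|^{2m−4}·|w−z|²·|Δ(w, z+εN(z))⁻² − Δ(w,z)⁻²| dH³(w) ≤ C·ε^β`
(the integrand is `+∞` where singular, e.g. at `w = z`). -/
theorem stmt17 (m β : ℝ) (hm1 : 3 / 2 < m) (hm2 : m < 2)
    (hβ0 : 0 < β) (hβ : β < m - 3 / 2) :
    ∃ C ε₀ : ℝ, 0 < ε₀ ∧ ∀ z ∈ bDm m, ∀ ε : ℝ, 0 < ε → ε < ε₀ →
      ∫⁻ w in bDm m,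
          (ENNReal.ofReal |(w 0).re|) ^ (2 * m - 4) *
            (if Deltam m w z = 0 ∨ Deltam m w (z + ε • Nm m z) = 0 then (⊤ : ℝ≥0∞)
              else ENNReal.ofReal (‖w - z‖ ^ 2 *
                ‖((Deltam m w (z + ε • Nm m z)) ^ 2)⁻¹ - ((Deltam m w z) ^ 2)⁻¹‖)) ∂μH[3]
        ≤ ENNReal.ofReal (C * ε ^ β) := by
  have h := stmt17_general m (4 - 2 * m) β (by linarith) hm2.le (by linarith) hβ0.le (by linarith)
  simpa only [neg_sub] using h

end
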